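/- arXiv:2006.00353 — 2 statements merged into one kernel-verified Lean document; each statement's English description precedes it below -/
import Mathlib

section
/- Let G act regularly on the point set of a partial geometry S of order (s,t,α); fix a point O and let Δ = {g ∈ G : O^g is collinear with O} ∪ {1}. Then for every nontrivial x ∈ G there is an integer u_x such that the number d₁(x) of points mapped by x to distinct collinear points satisfies d₁(x) = (s+1)(t+1) + u_x(s+t−α+1) = |x^G ∩ Δ|·|C_G(x)|, and moreover |x^G ∩ Δᶜ|·|C_G(x)| = t(s+1)(s−α)/α − u_x(s+t−α+1). -/
/-- A partial geometry `pg(s,t,α)`. -/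
structure IsPartialGeometry {P L : Type*} (incid : P → L → Prop) (s t a : ℕ) : Prop where
  point_lines : ∀ p : P, Nat.card {l : L | incid p l} = t + 1
  line_points : ∀ l : L, Nat.card {p : P | incid p l} = s + 1
  unique_line : ∀ p q : P, p ≠ q → Set.Subsingleton {l : L | incid p l ∧ incid q l}
  unique_point : ∀ l l' : L, l ≠ l' → Set.Subsingleton {p : P | incid p l ∧ incid p l'}
  alpha_count : ∀ (p : P) (l : L), ¬ incid p l →
    Nat.card {q : P | incid q l ∧ q ≠ p ∧ ∃ l', incid p l' ∧ incid q l'} = a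

/-- Two points are collinear if they are distinct and lie on a common line. -/
def CollinearPts {P L : Type*} (incid : P → L → Prop) (p q : P) : Prop :=
  p ≠ q ∧ ∃ l, incid p l ∧ incid q l

/-!
Let `A` be the adjacency matrix of the collinearity graph, a strongly regular graph whose
nontrivial eigenvalues `s - α` and `-t - 1` differ by `m = s + t - α + 1`, and let `X` be the
permutation matrix of a graph automorphism. Killing the all-ones direction of the integer matrix
`A + (t + 1) • 1`, which satisfies a quadratic equation modulo the all-ones matrix, leaves `F` with
`F² = v m F`, where `v` is the number of points. Since `X` commutes with `F` it preserves the range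
of `F`, a free `ℤ`-module on which `F X` acts as `v m X`; so `v m` divides `tr (F X)`. For a
fixed-point-free automorphism this is the congruence `d₁ ≡ (s + 1)(t + 1)` modulo `m`, an instance
of a theorem of Benson.

For a regular action the points are the `g⁻¹ • O`, and `x` maps `g⁻¹ • O` to a collinear point iff
`g x g⁻¹` lies in `Δ`; each conjugate of `x` arises from `|C_G(x)|` elements `g`.
-/

section TraceCongruence

open Matrix

variable {R : Type*} [CommRing R] [IsDomain R] [IsPrincipalIdealRing R]

theorem dvd_trace_mul_of_mul_self_eq_smul {M : Type*} [AddCommGroup M] [Module R M]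
    [Module.Free R M] [Module.Finite R M] {f g : Module.End R M} {m : R}
    (hf : f * f = m • f) (hfg : Commute f g) : m ∣ LinearMap.trace R M (f * g) := by
  have hg : ∀ w ∈ LinearMap.range f, g w ∈ LinearMap.range f := by
    rintro _ ⟨v, rfl⟩
    exact ⟨g v, LinearMap.congr_fun hfg.eq v⟩
  have hrestrict :
      (f.rangeRestrict ∘ₗ g) ∘ₗ (LinearMap.range f).subtype = m • g.restrict hg := by
    ext ⟨_, v, rfl⟩
    change f (g (f v)) = m • g (f v)
    calc f (g (f v)) = (f * f) (g v) := congrArg f (LinearMap.congr_fun hfg.eq v).symm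
      _ = m • g (f v) := by rw [hf]; exact congrArg (m • ·) (LinearMap.congr_fun hfg.eq v)
  have htrace : LinearMap.trace R M (f * g) =
      LinearMap.trace R _ ((f.rangeRestrict ∘ₗ g) ∘ₗ (LinearMap.range f).subtype) :=
    LinearMap.trace_comp_comm' (LinearMap.range f).subtype (f.rangeRestrict ∘ₗ g) |>.symm
  rw [htrace, hrestrict, map_smul]
  exact dvd_mul_right m _

variable {n : Type*} [Fintype n]

theorem dvd_matrix_trace_mul_of_mul_self_eq_smul {A X : Matrix n n R} {m : R}
    (hA : A * A = m • A) (hAX : Commute A X) : m ∣ (A * X).trace := by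
  classical
  rw [← Matrix.trace_toLin'_eq, Matrix.toLin'_mul]
  refine dvd_trace_mul_of_mul_self_eq_smul ?_ (hAX.map Matrix.toLinAlgEquiv')
  exact (map_mul Matrix.toLinAlgEquiv' A A).symm.trans (by rw [hA, map_smul]; rfl)

theorem dvd_matrix_trace_mul_sub_of_mul_self_eq [CharZero R] [Nonempty n]
    {A X : Matrix n n R} {m b K : R}
    (hA : A * A = m • A + b • of 1) (hAJ : A * of 1 = K • (of 1 : Matrix n n R))
    (hJA : of 1 * A = K • (of 1 : Matrix n n R)) (hAX : Commute A X)
    (hXJ : X * of 1 = (of 1 : Matrix n n R)) (hJX : of 1 * X = (of 1 : Matrix n n R)) :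
    m ∣ (A * X).trace - K := by
  set J : Matrix n n R := of 1 with hJ
  set v : R := (Fintype.card n : R)
  have hv : v ≠ 0 := Nat.cast_ne_zero.mpr Fintype.card_ne_zero
  have hJJ : J * J = v • J := by ext; simp [hJ, v, mul_apply]
  have hparam : K * K = m * K + b * v := by
    have hAAJ : A * A * J = (K * K) • J := by
      rw [mul_assoc, hAJ, mul_smul_comm, hAJ, smul_smul]
    rw [hA, add_mul, smul_mul_assoc, smul_mul_assoc, hAJ, hJJ, smul_smul, smul_smul,
      ← add_smul] at hAAJ
    simpa [hJ] using congr($hAAJ (Classical.arbitrary n) (Classical.arbitrary n)).symm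
  -- `A` has eigenvalue `K` on the all-ones vector, where `v • A - K • J` vanishes.
  have hF : (v • A - K • J) * (v • A - K • J) = (v * m) • (v • A - K • J) := by
    simp only [sub_mul, mul_sub, smul_mul_assoc, mul_smul_comm, hA, hAJ, hJA, hJJ]
    linear_combination (norm := module) (-v * hparam) • J
  have hFX : Commute (v • A - K • J) X :=
    (hAX.smul_left v).sub_left (Commute.smul_left (hJX.trans hXJ.symm) K)
  have htrace : ((v • A - K • J) * X).trace = v * ((A * X).trace - K) := by
    have : J.trace = v := by simp [hJ, v, trace]
    rw [sub_mul, smul_mul_assoc, smul_mul_assoc, hJX, trace_sub, trace_smul, trace_smul, this]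
    simp only [smul_eq_mul]
    ring
  exact (mul_dvd_mul_iff_left hv).mp
    (htrace ▸ dvd_matrix_trace_mul_of_mul_self_eq_smul hF hFX)

end TraceCongruence

section Benson

open Matrix

variable {V : Type*} [Fintype V] {Γ : SimpleGraph V} [DecidableRel Γ.Adj]

theorem adjMatrix_sub_smul_mul_of_isSRGWith [DecidableEq V] {n k l μ : ℕ}
    (hΓ : Γ.IsSRGWith n k l μ) {R : Type*} [CommRing R] {θ τ : R}
    (hsum : θ + τ = l - μ) (hprod : θ * τ = μ - k) :
    (Γ.adjMatrix R - θ • 1) * (Γ.adjMatrix R - τ • 1) = (μ : R) • of 1 := by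
  have hJ : Γᶜ.adjMatrix R = of 1 - 1 - Γ.adjMatrix R := by
    ext p q
    by_cases hpq : p = q <;> by_cases h : Γ.Adj p q <;> simp_all
  have hsq := hΓ.matrix_eq (α := R)
  simp only [hJ, ← Nat.cast_smul_eq_nsmul R, pow_two] at hsq
  simp only [sub_mul, mul_sub, smul_mul_assoc, mul_smul_comm, hsq, mul_one, one_mul]
  linear_combination (norm := module) hprod • (1 : Matrix V V R) - hsum • Γ.adjMatrix R

theorem commute_adjMatrix_permMatrix [DecidableEq V] (R : Type*) [NonAssocSemiring R]
    (σ : Γ ≃g Γ) :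
    Commute (Γ.adjMatrix R) (Equiv.Perm.permMatrix R σ.toEquiv) := by
  rw [commute_iff_eq, PEquiv.toMatrix_toPEquiv_mul, PEquiv.mul_toMatrix_toPEquiv]
  ext p q
  have : Γ.Adj p (σ.toEquiv.symm q) ↔ Γ.Adj (σ p) q := by
    rw [← σ.map_adj_iff]
    exact iff_of_eq (congrArg _ (σ.apply_symm_apply q))
  simp [this]

theorem trace_adjMatrix_mul_permMatrix [DecidableEq V] (R : Type*) [NonAssocSemiring R]
    (σ : Γ ≃g Γ) :
    (Γ.adjMatrix R * Equiv.Perm.permMatrix R σ.toEquiv).trace =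
      {p | Γ.Adj (σ p) p}.ncard := by
  have : {p | Γ.Adj (σ p) p} = ({p | Γ.Adj (σ p) p} : Finset V) := by simp
  rw [(commute_adjMatrix_permMatrix R σ).eq, PEquiv.toMatrix_toPEquiv_mul, this,
    Set.ncard_coe_finset]
  simp [trace]

theorem dvd_ncard_adj_apply_sub_of_isSRGWith [Nonempty V] {n k l μ : ℕ}
    (hΓ : Γ.IsSRGWith n k l μ) {θ τ : ℤ} (hsum : θ + τ = l - μ) (hprod : θ * τ = μ - k)
    (σ : Γ ≃g Γ) :
    θ - τ ∣ {p | Γ.Adj (σ p) p}.ncard - τ * (Function.fixedPoints σ).ncard - (k - τ) := by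
  classical
  set A := Γ.adjMatrix ℤ with hA
  set X := Equiv.Perm.permMatrix ℤ σ.toEquiv with hX
  have hAJ : A * of 1 = (k : ℤ) • (of 1 : Matrix V V ℤ) := by
    ext p q; simp [hA, hΓ.regular.degree_eq p]
  have hJA : of 1 * A = (k : ℤ) • (of 1 : Matrix V V ℤ) := by
    ext p q; simp [hA, hΓ.regular.degree_eq q]
  have hsq : (A - τ • 1) * (A - τ • 1) = (θ - τ) • (A - τ • 1) + (μ : ℤ) • of 1 := by
    rw [← adjMatrix_sub_smul_mul_of_isSRGWith hΓ hsum hprod,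
      ← smul_one_mul (θ - τ) (A - τ • 1), ← add_mul]
    congr 1
    module
  have htrace : ((A - τ • 1) * X).trace =
      {p | Γ.Adj (σ p) p}.ncard - τ * (Function.fixedPoints σ).ncard := by
    rw [sub_mul, smul_mul_assoc, one_mul, trace_sub, trace_smul,
      trace_adjMatrix_mul_permMatrix, trace_permutation]
    rfl
  rw [← htrace]
  refine dvd_matrix_trace_mul_sub_of_mul_self_eq hsq ?_ ?_ ?_ ?_ ?_
  · rw [sub_mul, hAJ, smul_mul_assoc, one_mul, sub_smul]
  · rw [mul_sub, hJA, mul_smul_comm, mul_one, sub_smul]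
  · exact (commute_adjMatrix_permMatrix ℤ σ).sub_left ((Commute.one_left X).smul_left τ)
  · rw [hX, PEquiv.toMatrix_toPEquiv_mul]; rfl
  · rw [hX, PEquiv.mul_toMatrix_toPEquiv]; rfl

end Benson

theorem ncard_smul_mem_eq_ncard_orbit_inter_mul_card_stabilizer {G X : Type*} [Group G]
    [MulAction G X] (x : X) (S : Set X) :
    {g : G | g • x ∈ S}.ncard =
      (MulAction.orbit G x ∩ S).ncard * Nat.card (MulAction.stabilizer G x) := by
  let φ := MulAction.ofQuotientStabilizer G x
  have himage : φ '' (φ ⁻¹' S) = MulAction.orbit G x ∩ S := by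
    rw [Set.image_preimage_eq_range_inter]
    congr 1
    exact (Function.Surjective.range_comp Quotient.mk_surjective φ).symm
  rw [← himage, Set.ncard_image_of_injective _ (MulAction.injective_ofQuotientStabilizer G x),
    mul_comm, ← Nat.card_coe_set_eq, ← Nat.card_coe_set_eq, ← Nat.card_prod]
  exact Nat.card_congr (QuotientGroup.preimageMkEquivSubgroupProdSet _ (φ ⁻¹' S))

theorem ncard_conj_mem_eq_ncard_conjugatesOf_inter {G : Type*} [Group G] (x : G) (S : Set G) :
    {g : G | g * x * g⁻¹ ∈ S}.ncard =
      (conjugatesOf x ∩ S).ncard * Nat.card (Subgroup.centralizer {x}) := by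
  rw [Subgroup.nat_card_centralizer_nat_card_stabilizer]
  have := ncard_smul_mem_eq_ncard_orbit_inter_mul_card_stabilizer (G := ConjAct G) x S
  rw [ConjAct.orbit_eq_carrier_conjClasses] at this
  exact this

theorem conjugatesOf_inter_union_one {G : Type*} [Group G] {x : G} (hx : x ≠ 1) (S : Set G) :
    conjugatesOf x ∩ (S ∪ {1}) = conjugatesOf x ∩ S := by
  have hone : 1 ∉ conjugatesOf x := fun h => hx (isConj_one_left.mp h)
  rw [Set.union_singleton, Set.inter_insert_of_notMem hone]

theorem conjugatesOf_inter_compl_union_one {G : Type*} [Group G] {x : G} (hx : x ≠ 1)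
    (S : Set G) : conjugatesOf x ∩ (S ∪ {1})ᶜ = conjugatesOf x ∩ Sᶜ := by
  rw [← Set.sdiff_eq, ← Set.sdiff_self_inter, conjugatesOf_inter_union_one hx,
    Set.sdiff_self_inter, Set.sdiff_eq]

theorem bijective_smul_of_free {P G : Type*} [Group G] [MulAction G P]
    (htrans : ∀ p q : P, ∃ g : G, g • p = q) (hfree : ∀ (g : G) (p : P), g • p = p → g = 1)
    (O : P) : Function.Bijective fun g : G => g • O := by
  refine ⟨fun g g' (e : g • O = g' • O) => ?_, htrans O⟩
  exact (inv_mul_eq_one.mp (hfree (g'⁻¹ * g) O (by rw [mul_smul, e, inv_smul_smul]))).symm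

theorem ncard_rel_smul_eq_ncard_conjugatesOf_inter {P G : Type*} [Group G] [MulAction G P] {O : P}
    (hO : Function.Bijective fun g : G => g • O) {r : P → P → Prop}
    (hr : ∀ (g : G) p q, r p q ↔ r (g • p) (g • q)) (x : G) :
    {p | r (x • p) p}.ncard = (conjugatesOf x ∩ {g | r (g • O) O}).ncard *
      Nat.card (Subgroup.centralizer {x}) := by
  rw [← ncard_conj_mem_eq_ncard_conjugatesOf_inter]
  have horbit : Function.Bijective fun g : G => g⁻¹ • O := hO.comp (Equiv.inv G).bijective
  refine (Set.ncard_congr (fun g _ => g⁻¹ • O) ?_ ?_ ?_).symm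
  · intro g hg
    rw [Set.mem_ofPred_eq, hr g]
    simpa [mul_smul] using hg
  · exact fun g g' _ _ => (horbit.1 ·)
  · intro p hp
    obtain ⟨g, rfl⟩ := horbit.2 p
    rw [Set.mem_ofPred_eq, hr g] at hp
    exact ⟨g, by simpa [mul_smul] using hp, rfl⟩

/-- The collinearity graph of an incidence relation: its vertices are the points, and adjacency is
`CollinearPts`. -/
def collinearityGraph {P L : Type*} (incid : P → L → Prop) : SimpleGraph P where
  Adj := CollinearPts incid
  symm := ⟨fun _ _ ⟨hne, l, hp, hq⟩ => ⟨hne.symm, l, hq, hp⟩⟩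
  loopless := ⟨fun _ h => h.1 rfl⟩

open scoped Classical in
/-- The point-line incidence matrix `N` of an incidence relation. It is taken over `ℤ` since it is
used to compute with integral adjacency matrices: `N Nᵀ` is the adjacency matrix of the
collinearity graph up to a multiple of the identity. -/
noncomputable def incidenceMatrix {P L : Type*} (incid : P → L → Prop) : Matrix P L ℤ :=
  Matrix.of fun p l => if incid p l then 1 else 0

theorem collinearityGraph_adj {P L : Type*} {incid : P → L → Prop} {p q : P} :
    (collinearityGraph incid).Adj p q ↔ CollinearPts incid p q :=
  Iff.rfl

open scoped Classical in
theorem incidenceMatrix_apply {P L : Type*} {incid : P → L → Prop} {p : P} {l : L} :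
    incidenceMatrix incid p l = if incid p l then 1 else 0 :=
  rfl

namespace IsPartialGeometry

open Matrix

variable {P L : Type*} {incid : P → L → Prop} {s t a : ℕ}

theorem exists_line (h : IsPartialGeometry incid s t a) (p : P) : ∃ l, incid p l := by
  have : Nat.card {l | incid p l} ≠ 0 := by rw [h.point_lines p]; exact t.succ_ne_zero
  obtain ⟨l, hl⟩ := (Nat.card_ne_zero.mp this).1
  exact ⟨l, hl⟩

theorem ncard_collinearPts_of_incid [Finite P] (h : IsPartialGeometry incid s t a) {p : P} {l : L}
    (hpl : incid p l) : {q | CollinearPts incid p q ∧ incid q l}.ncard = s := by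
  have : {q | CollinearPts incid p q ∧ incid q l} = {q | incid q l} \ {p} := by
    ext q
    constructor
    · rintro ⟨⟨hpq, -⟩, hql⟩
      exact ⟨hql, hpq.symm⟩
    · rintro ⟨hql, hqp⟩
      exact ⟨⟨Ne.symm hqp, l, hpl, hql⟩, hql⟩
  rw [this, Set.ncard_sdiff_singleton_of_mem (show p ∈ {q | incid q l} from hpl),
    ← Nat.card_coe_set_eq, h.line_points, Nat.add_sub_cancel]

theorem ncard_collinearPts_of_not_incid (h : IsPartialGeometry incid s t a) {p : P} {l : L}
    (hpl : ¬incid p l) : {q | CollinearPts incid p q ∧ incid q l}.ncard = a := by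
  rw [← h.alpha_count p l hpl, Nat.card_coe_set_eq]
  congr 1
  ext q
  simp only [CollinearPts, ne_comm, Set.mem_ofPred_eq]
  tauto

theorem incidenceMatrix_mulVec_one [Fintype L] (h : IsPartialGeometry incid s t a) :
    incidenceMatrix incid *ᵥ 1 = ((t : ℤ) + 1) • 1 := by
  classical
  ext p
  have := h.point_lines p
  rw [Nat.card_eq_fintype_card, Fintype.card_subtype] at this
  simpa [mulVec, dotProduct, incidenceMatrix_apply] using
    congrArg (Nat.cast : ℕ → ℤ) this

theorem one_vecMul_incidenceMatrix [Fintype P] (h : IsPartialGeometry incid s t a) :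
    1 ᵥ* incidenceMatrix incid = ((s : ℤ) + 1) • 1 := by
  classical
  ext l
  have := h.line_points l
  rw [Nat.card_eq_fintype_card, Fintype.card_subtype] at this
  simpa [vecMul, dotProduct, incidenceMatrix_apply] using
    congrArg (Nat.cast : ℕ → ℤ) this

section AdjMatrix

variable [DecidableRel (collinearityGraph incid).Adj]

theorem incidenceMatrix_mul_transpose [Fintype L] [DecidableEq P]
    (h : IsPartialGeometry incid s t a) :
    incidenceMatrix incid * (incidenceMatrix incid)ᵀ =
      (collinearityGraph incid).adjMatrix ℤ + ((t : ℤ) + 1) • 1 := by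
  classical
  ext p q
  have hcount : (incidenceMatrix incid * (incidenceMatrix incid)ᵀ) p q =
      ∑ l, if incid p l ∧ incid q l then 1 else 0 := by
    simp [mul_apply, incidenceMatrix_apply, ← ite_and, and_comm]
  rw [hcount, Matrix.add_apply, Matrix.smul_apply]
  obtain rfl | hpq := eq_or_ne p q
  · have hself : ¬CollinearPts incid p p := fun hpp => hpp.1 rfl
    have hlines := congrFun h.incidenceMatrix_mulVec_one p
    simpa [collinearityGraph_adj, hself, mulVec, dotProduct, incidenceMatrix_apply] using hlines
  rw [one_apply_ne hpq]
  by_cases hcol : CollinearPts incid p q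
  · obtain ⟨-, l, hpl, hql⟩ := id hcol
    have hunique : ∀ l', incid p l' ∧ incid q l' ↔ l' = l := fun l' =>
      ⟨fun hl' => h.unique_line p q hpq hl' ⟨hpl, hql⟩, fun hl' => hl' ▸ ⟨hpl, hql⟩⟩
    simp [collinearityGraph_adj, hunique, hcol]
  · have hnone : ∀ l, ¬(incid p l ∧ incid q l) := fun l hl => hcol ⟨hpq, l, hl⟩
    simp [collinearityGraph_adj, hnone, hcol]

theorem adjMatrix_mul_incidenceMatrix [Fintype P] (h : IsPartialGeometry incid s t a) :
    (collinearityGraph incid).adjMatrix ℤ * incidenceMatrix incid =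
      ((s : ℤ) - a) • incidenceMatrix incid + (a : ℤ) • of 1 := by
  classical
  ext p l
  have hcount : ((collinearityGraph incid).adjMatrix ℤ * incidenceMatrix incid) p l =
      {q | CollinearPts incid p q ∧ incid q l}.ncard := by
    rw [Set.ncard_eq_toFinset_card']
    simp [mul_apply, incidenceMatrix_apply, ← ite_and, collinearityGraph_adj, and_comm]
  rw [hcount]
  by_cases hpl : incid p l
  · simp [h.ncard_collinearPts_of_incid hpl, incidenceMatrix_apply, hpl]
  · simp [h.ncard_collinearPts_of_not_incid hpl, incidenceMatrix_apply, hpl]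

variable [Fintype P] [Finite L]

theorem adjMatrix_mul_self [DecidableEq P] (h : IsPartialGeometry incid s t a) :
    (collinearityGraph incid).adjMatrix ℤ * (collinearityGraph incid).adjMatrix ℤ =
      ((s : ℤ) - t - a - 1) • (collinearityGraph incid).adjMatrix ℤ +
        (((s : ℤ) - a) * (t + 1)) • 1 + ((a : ℤ) * (t + 1)) • of 1 := by
  have := Fintype.ofFinite L
  have hJ : (of 1 : Matrix P L ℤ) * (incidenceMatrix incid)ᵀ = ((t : ℤ) + 1) • of 1 := by
    ext p q
    simpa [mulVec, dotProduct, mul_apply] using congrFun h.incidenceMatrix_mulVec_one q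
  have hprod := congrArg (· * (incidenceMatrix incid)ᵀ) h.adjMatrix_mul_incidenceMatrix
  simp only [Matrix.mul_assoc, Matrix.add_mul, Matrix.smul_mul, hJ,
    h.incidenceMatrix_mul_transpose, mul_add, mul_smul_comm, mul_one] at hprod
  linear_combination (norm := module) hprod

theorem isRegularOfDegree_collinearityGraph (h : IsPartialGeometry incid s t a) :
    (collinearityGraph incid).IsRegularOfDegree (s * (t + 1)) := by
  classical
  have := Fintype.ofFinite L
  intro p
  have hsum := congrFun (congrArg (· *ᵥ 1) h.incidenceMatrix_mul_transpose) p
  simp only [← mulVec_mulVec, mulVec_transpose, h.one_vecMul_incidenceMatrix, mulVec_smul,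
    h.incidenceMatrix_mulVec_one, add_mulVec, smul_mulVec, one_mulVec] at hsum
  have hdegree : ((t : ℤ) + 1) * (s + 1) = (collinearityGraph incid).degree p + (t + 1) := by
    simpa [mul_comm] using hsum
  zify
  linear_combination -hdegree

theorem card_commonNeighbors (h : IsPartialGeometry incid s t a) {p q : P} (hpq : p ≠ q) :
    (Fintype.card ((collinearityGraph incid).commonNeighbors p q) : ℤ) =
      ((s : ℤ) - t - a - 1) * (collinearityGraph incid).adjMatrix ℤ p q + a * (t + 1) := by
  classical
  have hwalks := (collinearityGraph incid).adjMatrix_pow_apply_eq_card_walk (α := ℤ) 2 p q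
  rw [@Fintype.card_congr _ _ ((collinearityGraph incid).fintypeSetWalkLength p q 2) _
    ((collinearityGraph incid).walkLengthTwoEquivCommonNeighbors p q), pow_two,
    h.adjMatrix_mul_self] at hwalks
  rw [← hwalks, Matrix.add_apply, Matrix.add_apply, Matrix.smul_apply, Matrix.smul_apply,
    one_apply_ne hpq]
  simp

theorem isSRGWith_collinearityGraph (h : IsPartialGeometry incid s t a) (ha : 1 ≤ a) :
    (collinearityGraph incid).IsSRGWith (Fintype.card P) (s * (t + 1)) (s - 1 + t * (a - 1))
      (a * (t + 1)) := by
  refine ⟨rfl, h.isRegularOfDegree_collinearityGraph, fun p q hpq => ?_, fun p q hne hpq => ?_⟩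
  · have hs : 1 ≤ s := by
      obtain ⟨-, l, hpl, hql⟩ := id hpq
      rw [← h.ncard_collinearPts_of_incid hpl, Nat.one_le_iff_ne_zero]
      exact Set.ncard_ne_zero_of_mem (show q ∈ {q | CollinearPts incid p q ∧ incid q l} from
        ⟨hpq, hql⟩)
    zify [ha, hs]
    rw [h.card_commonNeighbors hpq.ne, SimpleGraph.adjMatrix_apply, if_pos hpq]
    ring
  · zify
    rw [h.card_commonNeighbors hne, SimpleGraph.adjMatrix_apply, if_neg hpq]
    ring

end AdjMatrix

variable [Finite P] [Finite L]

theorem mul_card_eq [Nonempty P] (h : IsPartialGeometry incid s t a) :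
    a * Nat.card P = (s + 1) * (s * t + a) := by
  classical
  have := Fintype.ofFinite P
  obtain ⟨l, -⟩ := h.exists_line (Classical.arbitrary P)
  have hA : 1 ᵥ* (collinearityGraph incid).adjMatrix ℤ = ((s : ℤ) * (t + 1)) • 1 := by
    ext p
    simp [h.isRegularOfDegree_collinearityGraph.degree_eq p]
  have hsum := congrFun (congrArg (1 ᵥ* ·) h.adjMatrix_mul_incidenceMatrix) l
  simp only [← vecMul_vecMul, hA, vecMul_add, vecMul_smul, smul_vecMul,
    h.one_vecMul_incidenceMatrix] at hsum
  have hcard : (s : ℤ) * (t + 1) * (s + 1) = (s - a) * (s + 1) + a * Nat.card P := by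
    simpa [vecMul, dotProduct, -smul_add] using hsum
  zify
  linear_combination -hcard

theorem one_le_of_nontrivial [Nontrivial P] (h : IsPartialGeometry incid s t a) (ha : 1 ≤ a) :
    1 ≤ s := by
  rw [Nat.one_le_iff_ne_zero]
  rintro rfl
  have hcard := h.mul_card_eq
  have := Finite.one_lt_card (α := P)
  simp only [zero_mul, zero_add, one_mul] at hcard
  nlinarith

theorem dvd_ncard_collinearPts_sub [Nontrivial P] (h : IsPartialGeometry incid s t a)
    (ha : 1 ≤ a) (σ : collinearityGraph incid ≃g collinearityGraph incid) :
    (s : ℤ) + t - a + 1 ∣ {p | CollinearPts incid (σ p) p}.ncard +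
      (t + 1) * (Function.fixedPoints σ).ncard - (s + 1) * (t + 1) := by
  classical
  have := Fintype.ofFinite P
  have hs := h.one_le_of_nontrivial ha
  have hsum : ((s : ℤ) - a) + -(t + 1) = (s - 1 + t * (a - 1) : ℕ) - (a * (t + 1) : ℕ) := by
    push_cast [ha, hs]
    ring
  have hprod : ((s : ℤ) - a) * -(t + 1) = (a * (t + 1) : ℕ) - (s * (t + 1) : ℕ) := by
    push_cast
    ring
  convert dvd_ncard_adj_apply_sub_of_isSRGWith (h.isSRGWith_collinearityGraph ha) hsum hprod σ
    using 1
  · ring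
  · push_cast
    simp only [collinearityGraph_adj]
    ring

theorem dvd_ncard_collinearPts_sub_of_forall_ne [Nontrivial P]
    (h : IsPartialGeometry incid s t a) (ha : 1 ≤ a) {G : Type*} [Group G] [MulAction G P] {x : G}
    (hcol : ∀ p q, CollinearPts incid p q ↔ CollinearPts incid (x • p) (x • q))
    (hfixed : ∀ p : P, x • p ≠ p) :
    (s : ℤ) + t - a + 1 ∣
      {p | CollinearPts incid (x • p) p}.ncard - (s + 1) * (t + 1) := by
  let σ : collinearityGraph incid ≃g collinearityGraph incid :=
    { toEquiv := MulAction.toPerm x, map_rel_iff' := (hcol _ _).symm }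
  have hσ : Function.fixedPoints σ = ∅ := Set.eq_empty_of_forall_notMem hfixed
  have hdvd := h.dvd_ncard_collinearPts_sub ha σ
  rw [hσ, Set.ncard_empty, Nat.cast_zero, mul_zero, add_zero] at hdvd
  exact hdvd

theorem ncard_not_collinearPts_eq [Nonempty P] (h : IsPartialGeometry incid s t a) (ha : 1 ≤ a)
    (f : P → P) {u : ℤ}
    (hd : ({p | CollinearPts incid (f p) p}.ncard : ℤ) =
      (s + 1) * (t + 1) + u * (s + t - a + 1)) :
    ({p | ¬CollinearPts incid (f p) p}.ncard : ℝ) =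
      t * (s + 1) * (s - a) / a - u * (s + t - a + 1) := by
  have ha₀ : (a : ℝ) ≠ 0 := Nat.cast_ne_zero.mpr (Nat.one_le_iff_ne_zero.mp ha)
  have hd' : ({p | CollinearPts incid (f p) p}.ncard : ℝ) =
      (s + 1) * (t + 1) + u * (s + t - a + 1) := mod_cast hd
  have hcard : (a : ℝ) * Nat.card P = (s + 1) * (s * t + a) := mod_cast h.mul_card_eq
  have htotal : ({p | CollinearPts incid (f p) p}.ncard : ℝ) +
      {p | ¬CollinearPts incid (f p) p}.ncard = Nat.card P :=
    mod_cast Set.ncard_add_ncard_compl {p | CollinearPts incid (f p) p}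
  field_simp
  linear_combination a * htotal - a * hd' + hcard

end IsPartialGeometry

theorem collinearPts_smul_iff {P L G : Type*} [Group G] [MulAction G P] [MulAction G L]
    {incid : P → L → Prop}
    (hpres : ∀ (g : G) (p : P) (l : L), incid p l ↔ incid (g • p) (g • l)) (g : G) (p q : P) :
    CollinearPts incid p q ↔ CollinearPts incid (g • p) (g • q) := by
  refine and_congr (MulAction.injective g).ne_iff.symm ?_
  rw [(MulAction.surjective g).exists (p := fun l => incid (g • p) l ∧ incid (g • q) l)]
  simp only [← hpres]

theorem partialGeometry_regular_action_counts_general {P L G : Type*} [Finite P] [Finite L]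
    [Group G] [MulAction G P] (incid : P → L → Prop) (s t a : ℕ) (ha : 1 ≤ a)
    (h : IsPartialGeometry incid s t a)
    (hcol : ∀ (g : G) (p q : P), CollinearPts incid p q ↔ CollinearPts incid (g • p) (g • q))
    (htrans : ∀ p q : P, ∃ g : G, g • p = q)
    (hfree : ∀ (g : G) (p : P), g • p = p → g = 1)
    (O : P) (x : G) (hx : x ≠ 1) :
    ∃ u : ℤ,
      (Set.ncard {p : P | CollinearPts incid (x • p) p} : ℤ)
          = ((s : ℤ) + 1) * ((t : ℤ) + 1) + u * ((s : ℤ) + t - a + 1) ∧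
      Set.ncard {p : P | CollinearPts incid (x • p) p}
          = Set.ncard ({y : G | ∃ g : G, g * x * g⁻¹ = y} ∩
              ({g : G | CollinearPts incid (g • O) O} ∪ {1})) *
            Nat.card ↥(Subgroup.centralizer ({x} : Set G)) ∧
      ((Set.ncard ({y : G | ∃ g : G, g * x * g⁻¹ = y} ∩
              (({g : G | CollinearPts incid (g • O) O} ∪ {1}) : Set G)ᶜ) *
          Nat.card ↥(Subgroup.centralizer ({x} : Set G)) : ℕ) : ℝ)
          = (t : ℝ) * ((s : ℝ) + 1) * ((s : ℝ) - a) / a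
              - (u : ℝ) * ((s : ℝ) + (t : ℝ) - (a : ℝ) + 1) := by
  have hfixed (p : P) : x • p ≠ p := fun hp => hx (hfree x p hp)
  have : Nontrivial P := ⟨x • O, O, hfixed O⟩
  obtain ⟨u, hu⟩ := h.dvd_ncard_collinearPts_sub_of_forall_ne ha (hcol x) hfixed
  have hO : Function.Bijective fun g : G => g • O := bijective_smul_of_free htrans hfree O
  have hconj : {y : G | ∃ g : G, g * x * g⁻¹ = y} = conjugatesOf x :=
    Set.ext fun y => isConj_iff.symm
  have hcollinear := ncard_rel_smul_eq_ncard_conjugatesOf_inter hO hcol x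
  have hnot := ncard_rel_smul_eq_ncard_conjugatesOf_inter hO (fun g p q => not_congr (hcol g p q)) x
  rw [hconj, conjugatesOf_inter_union_one hx, conjugatesOf_inter_compl_union_one hx,
    ← hcollinear, Set.compl_ofPred, ← hnot]
  exact ⟨u, by linear_combination hu, rfl,
    h.ncard_not_collinearPts_eq ha (x • ·) (by linear_combination hu)⟩

/-- Let `G` act regularly on the point set of a partial geometry of order `(s,t,α)`;
fix a point `O` and let `Δ = {g : O^g` collinear with `O} ∪ {1}`.  Then for every
nontrivial `x ∈ G` there is an integer `u` such that the number `d₁(x)` of points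
mapped by `x` to distinct collinear points satisfies
`d₁(x) = (s+1)(t+1) + u(s+t-α+1) = |x^G ∩ Δ|⬝|C_G(x)|`, and moreover
`|x^G ∩ Δᶜ|⬝|C_G(x)| = t(s+1)(s-α)/α - u(s+t-α+1)`. -/
theorem partialGeometry_regular_action_counts {P L G : Type*} [Fintype P] [Fintype L]
    [Group G] [Fintype G] [MulAction G P] [MulAction G L]
    (incid : P → L → Prop) (s t a : ℕ) (ha : 1 ≤ a)
    (h : IsPartialGeometry incid s t a)
    (hpres : ∀ (g : G) (p : P) (l : L), incid p l ↔ incid (g • p) (g • l))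
    (htrans : ∀ p q : P, ∃ g : G, g • p = q)
    (hfree : ∀ (g : G) (p : P), g • p = p → g = 1)
    (O : P) (x : G) (hx : x ≠ 1) :
    ∃ u : ℤ,
      (Set.ncard {p : P | CollinearPts incid (x • p) p} : ℤ)
          = ((s : ℤ) + 1) * ((t : ℤ) + 1) + u * ((s : ℤ) + t - a + 1) ∧
      Set.ncard {p : P | CollinearPts incid (x • p) p}
          = Set.ncard ({y : G | ∃ g : G, g * x * g⁻¹ = y} ∩
              ({g : G | CollinearPts incid (g • O) O} ∪ {1})) *
            Nat.card ↥(Subgroup.centralizer ({x} : Set G)) ∧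
      ((Set.ncard ({y : G | ∃ g : G, g * x * g⁻¹ = y} ∩
              (({g : G | CollinearPts incid (g • O) O} ∪ {1}) : Set G)ᶜ) *
          Nat.card ↥(Subgroup.centralizer ({x} : Set G)) : ℕ) : ℝ)
          = (t : ℝ) * ((s : ℝ) + 1) * ((s : ℝ) - a) / a
              - (u : ℝ) * ((s : ℝ) + (t : ℝ) - (a : ℝ) + 1) := by
  exact partialGeometry_regular_action_counts_general incid s t a ha h
    (collinearPts_smul_iff hpres) htrans hfree O x hx
end

section
/- Let p be a prime and G a nontrivial finite p-group of order v, and suppose (v,k,λ,μ) are parameters of a non-conference strongly regular graph with integer eigenvalues ν₂ > ν₃ such that ν₂ − ν₃ divides neither μ − ν₃(ν₂+1) nor v − 2k + λ − ν₃(ν₂+1). Then there is no regular (v,k,λ,μ)-partial difference set in G. -/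
/-- `S` is a regular `(v,k,λ,μ)`-partial difference set in the finite group `G`:
`|G| = v`, `|S| = k`, `1 ∉ S`, `S = S⁻¹`, and every nonidentity element `g` has
exactly `λ` representations `g = a * b⁻¹` with `a, b ∈ S` if `g ∈ S`, and exactly
`μ` such representations if `g ∉ S`. -/
def IsRegularPDS {G : Type*} [Group G] [Fintype G] [DecidableEq G]
    (S : Finset G) (v k l m : ℕ) : Prop :=
  Fintype.card G = v ∧ S.card = k ∧ (1 : G) ∉ S ∧ (∀ s : G, s ∈ S ↔ s⁻¹ ∈ S) ∧
    (∀ g ∈ S, ((S ×ˢ S).filter (fun p => p.1 * p.2⁻¹ = g)).card = l) ∧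
    (∀ g : G, g ∉ S → g ≠ 1 → ((S ×ˢ S).filter (fun p => p.1 * p.2⁻¹ = g)).card = m)

/-!
Let `x ≠ 1` be central in `G` and let `e ∈ ℚ[G]` be the idempotent projecting onto the
`ν₂`-eigenspace of the Cayley graph. As `x` is central of finite order, some power of `x⁻¹ * e`
is `e`, so `x⁻¹ * e` is integral over `ℤ` and its trace in the regular representation is an integer.
This trace is `|G|` times the coefficient of `e` at `x`, namely
`(|G| * [x ∈ S] - (k - ν₃)) / (ν₂ - ν₃)`; so `ν₂ - ν₃` divides the numerator, which is one of the
two excluded divisibilities according to whether `x ∈ S`.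
-/

open scoped Pointwise MonoidAlgebra

section Integrality

variable {R K : Type*} [CommRing R]

theorem isIntegral_of_mem_spectrum [Field K] [Algebra R K] {A : Type*} [Ring A] [Algebra R A]
    [Algebra K A] [IsScalarTower R K A] {x : A} (hx : IsIntegral R x) {r : K}
    (hr : r ∈ spectrum K x) : IsIntegral R r := by
  rcases subsingleton_or_nontrivial A with _ | _
  · simp [spectrum.of_subsingleton] at hr
  obtain ⟨f, hf, hfx⟩ := hx
  have hfr : (f.map (algebraMap R K)).eval r ∈ spectrum K (0 : A) := by
    have h := spectrum.subset_polynomial_aeval x (f.map (algebraMap R K)) ⟨r, hr, rfl⟩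
    rwa [Polynomial.aeval_map_algebraMap, Polynomial.aeval_def, hfx] at h
  rw [spectrum.zero_eq, Set.mem_singleton_iff, Polynomial.eval_map] at hfr
  exact ⟨f, hf, hfr⟩

theorem isIntegral_matrix_trace [Field K] [Algebra R K] {n : Type*} [Fintype n] [DecidableEq n]
    {M : Matrix n n K} (hM : IsIntegral R M) : IsIntegral R M.trace := by
  let L := AlgebraicClosure K
  let ι : Matrix n n K →ₐ[R] Matrix n n L := (Algebra.algHom R K L).mapMatrix
  rw [← isIntegral_algebraMap_iff (algebraMap K L).injective]
  have htrace : algebraMap K L M.trace = (ι M).trace := AddMonoidHom.map_trace (algebraMap K L) M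
  rw [htrace, Matrix.trace_eq_sum_roots_charpoly]
  refine IsIntegral.multiset_sum fun r hr ↦ isIntegral_of_mem_spectrum (hM.map ι) ?_
  exact Matrix.mem_spectrum_of_isRoot_charpoly (Polynomial.isRoot_of_mem_roots hr)

theorem isIntegral_of_isIdempotentElem {A : Type*} [Ring A] [Algebra R A] {e : A}
    (he : IsIdempotentElem e) : IsIntegral R e := by
  nontriviality R
  refine ⟨.X ^ 2 - .X, Polynomial.monic_X_pow_sub (by simp), ?_⟩
  simp [pow_two, he.eq]

theorem dvd_of_isIntegral_div [IsIntegrallyClosed R] [Field K] [Algebra R K]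
    [IsFractionRing R K] {c d : R} (hd : d ≠ 0)
    (h : IsIntegral R (algebraMap R K c / algebraMap R K d)) : d ∣ c := by
  obtain ⟨q, hq⟩ := IsIntegrallyClosed.isIntegral_iff.mp h
  have hd' : algebraMap R K d ≠ 0 := by simpa using hd
  refine ⟨q, IsFractionRing.injective R K ?_⟩
  rw [map_mul, hq, mul_div_cancel₀ _ hd']

end Integrality

section GroupAlgebra

variable {G : Type*} [Group G]

theorem trace_leftMulMatrix_monoidAlgebra {R : Type*} [CommRing R] [Fintype G] [DecidableEq G]
    (y : R[G]) : (Algebra.leftMulMatrix (MonoidAlgebra.basis G R) y).trace =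
      Fintype.card G * y.coeff 1 := by
  simp [Matrix.trace, Algebra.leftMulMatrix_eq_repr_mul, MonoidAlgebra.basis]

theorem isIntegral_card_mul_coeff {R K : Type*} [CommRing R] [Field K] [Algebra R K] [Fintype G]
    {e : K[G]} (he : IsIdempotentElem e) {x : G} (hx : x ∈ Subgroup.center G) :
    IsIntegral R (Fintype.card G * e.coeff x) := by
  have hcomm : Commute (MonoidAlgebra.single x⁻¹ (1 : K)) e :=
    MonoidAlgebra.single_commute (fun g ↦ Subgroup.mem_center_iff.mp (inv_mem hx) g |>.symm)
      .one_left e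
  have hpow : (MonoidAlgebra.single x⁻¹ (1 : K) * e) ^ orderOf x = e := by
    rw [hcomm.mul_pow, MonoidAlgebra.single_pow, inv_pow, pow_orderOf_eq_one, inv_one, one_pow,
      ← MonoidAlgebra.one_def, one_mul, he.pow_eq (orderOf_pos x).ne']
  have hint : IsIntegral R (MonoidAlgebra.single x⁻¹ (1 : K) * e) :=
    .of_pow (orderOf_pos x) (hpow.symm ▸ isIntegral_of_isIdempotentElem he)
  classical
  let regularRep := (Algebra.leftMulMatrix (MonoidAlgebra.basis G K)).restrictScalars R
  have htrace : (regularRep (MonoidAlgebra.single x⁻¹ 1 * e)).trace =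
      Fintype.card G * e.coeff x := by
    rw [AlgHom.restrictScalars_apply, trace_leftMulMatrix_monoidAlgebra]
    simp
  exact htrace ▸ isIntegral_matrix_trace (hint.map regularRep)

end GroupAlgebra

section GroupSum

/-- The sum `∑ g ∈ S, g` in the group algebra `R[G]`; for a partial difference set `S` it acts by
left multiplication as the adjacency operator of the Cayley graph. -/
noncomputable def groupSum (R : Type*) [Semiring R] {G : Type*} (S : Finset G) : R[G] :=
  ∑ g ∈ S, MonoidAlgebra.single g 1

variable {R G : Type*} [Semiring R]

theorem coeff_groupSum [DecidableEq G] (S : Finset G) (g : G) :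
    (groupSum R S).coeff g = if g ∈ S then 1 else 0 := by
  simp [groupSum, MonoidAlgebra.coeff_sum, Finsupp.finsetSum_apply, Finsupp.single_apply]

variable [Group G]

theorem coeff_groupSum_mul_groupSum_inv [DecidableEq G] (S T : Finset G) (g : G) :
    (groupSum R S * groupSum R T⁻¹).coeff g =
      (((S ×ˢ T).filter fun p ↦ p.1 * p.2⁻¹ = g).card : R) := by
  simp [groupSum, Finset.sum_mul_sum, MonoidAlgebra.coeff_sum, Finsupp.finsetSum_apply,
    Finsupp.single_apply, ← Finset.sum_product', Finset.sum_boole]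

theorem card_filter_mul_inv_eq_one [DecidableEq G] (S : Finset G) :
    ((S ×ˢ S).filter fun p ↦ p.1 * p.2⁻¹ = 1).card = S.card := by
  simp only [mul_inv_eq_one, ← Finset.diag_card S, Finset.diag_eq_filter]

variable [Fintype G]

theorem single_mul_groupSum_univ (g : G) :
    MonoidAlgebra.single g 1 * groupSum R Finset.univ = groupSum R Finset.univ := by
  classical
  ext h
  simp [coeff_groupSum]

theorem groupSum_univ_mul_single (g : G) :
    groupSum R Finset.univ * MonoidAlgebra.single g 1 = groupSum R Finset.univ := by
  classical
  ext h
  simp [coeff_groupSum]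

theorem groupSum_mul_groupSum_univ (S : Finset G) :
    groupSum R S * groupSum R Finset.univ = (S.card : R) • groupSum R Finset.univ := by
  rw [groupSum, Finset.sum_mul]
  simp [single_mul_groupSum_univ, Nat.cast_smul_eq_nsmul]

theorem groupSum_univ_mul_groupSum (S : Finset G) :
    groupSum R Finset.univ * groupSum R S = (S.card : R) • groupSum R Finset.univ := by
  rw [groupSum.eq_1 R S, Finset.mul_sum]
  simp [groupSum_univ_mul_single, Nat.cast_smul_eq_nsmul]

end GroupSum

theorem isIdempotentElem_smul_sub_mul {K A : Type*} [Field K] [Ring A] [Algebra K A] {s q : A}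
    {a b : K} (hab : a ≠ b) (hq : IsIdempotentElem q) (hsq : Commute s q)
    (hroots : (s - algebraMap K A a) * (s - algebraMap K A b) * q = 0) :
    IsIdempotentElem ((a - b)⁻¹ • ((s - algebraMap K A b) * q)) := by
  set t := s - algebraMap K A b with ht
  have htq : Commute t q := hsq.sub_left (Algebra.commute_algebraMap_left b q)
  have hshift : t = (s - algebraMap K A a) + algebraMap K A (a - b) := by
    rw [map_sub, ht]; abel
  have hsquare : t * q * (t * q) = (a - b) • (t * q) := calc
    t * q * (t * q) = t * t * q := by rw [htq.symm.mul_mul_mul_comm, hq.eq]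
    _ = (a - b) • (t * q) := by
      nth_rw 1 [hshift]
      rw [add_mul, add_mul, hroots, zero_add, mul_assoc, Algebra.smul_def]
  rw [IsIdempotentElem, smul_mul_smul_comm, hsquare, smul_smul, mul_assoc,
    inv_mul_cancel₀ (sub_ne_zero.mpr hab), mul_one]

/-- The projection `(a - b)⁻¹ (∑ g ∈ S, g - b) (1 - |G|⁻¹ ∑ g, g)` in `K[G]`: when `a` and `b` are
the eigenvalues of the Cayley graph of `S` on the orthogonal complement of the constants, it
projects onto the `a`-eigenspace there. -/
noncomputable def eigenprojection {G K : Type*} [Group G] [Fintype G] [Field K] (S : Finset G)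
    (a b : K) : K[G] :=
  (a - b)⁻¹ • ((groupSum K S - algebraMap K K[G] b) *
    (1 - (Fintype.card G : K)⁻¹ • groupSum K Finset.univ))

theorem coeff_eigenprojection {G K : Type*} [Group G] [Fintype G] [DecidableEq G] [Field K]
    (S : Finset G) (a b : K) {x : G} (hx : x ≠ 1) :
    (eigenprojection S a b).coeff x =
      (a - b)⁻¹ * ((if x ∈ S then 1 else 0) - (Fintype.card G : K)⁻¹ * (S.card - b)) := by
  simp [eigenprojection, mul_sub, sub_mul, groupSum_mul_groupSum_univ, coeff_groupSum,
    Algebra.algebraMap_eq_smul_one, MonoidAlgebra.one_def, hx.symm]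

namespace IsRegularPDS

variable {G : Type*} [Group G] [Fintype G] [DecidableEq G] {S : Finset G} {v k l m : ℕ}

theorem inv_eq (hS : IsRegularPDS S v k l m) : S⁻¹ = S := by
  obtain ⟨-, -, -, hinv, -⟩ := hS
  ext g
  rw [Finset.mem_inv', ← hinv]

theorem groupSum_mul_self (R : Type*) [Ring R] (hS : IsRegularPDS S v k l m) :
    groupSum R S * groupSum R S =
      (k - m : R) • 1 + (l - m : R) • groupSum R S + (m : R) • groupSum R Finset.univ := by
  obtain ⟨-, hk, hone, -, hl, hm⟩ := id hS
  ext g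
  nth_rw 2 [← hS.inv_eq]
  rw [coeff_groupSum_mul_groupSum_inv]
  rcases eq_or_ne g 1 with rfl | hg
  · simp [card_filter_mul_inv_eq_one, hk, coeff_groupSum, hone, MonoidAlgebra.one_def]
  · by_cases hgS : g ∈ S
    · simp [hl g hgS, coeff_groupSum, hgS, MonoidAlgebra.one_def, hg.symm]
    · simp [hm g hgS hg, coeff_groupSum, hgS, MonoidAlgebra.one_def, hg.symm]

variable {K : Type*} [Field K]

theorem sub_mul_sub_eq_smul_groupSum_univ (hS : IsRegularPDS S v k l m) {a b : K}
    (hsum : a + b = l - m) (hprod : a * b = m - k) :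
    (groupSum K S - algebraMap K K[G] a) * (groupSum K S - algebraMap K K[G] b) =
      (m : K) • groupSum K Finset.univ := by
  simp only [Algebra.algebraMap_eq_smul_one, sub_mul, mul_sub, smul_mul_assoc, mul_smul_comm,
    one_mul, mul_one, hS.groupSum_mul_self K]
  match_scalars
  · linear_combination hprod
  · linear_combination -hsum
  · ring

theorem isIdempotentElem_eigenprojection (hS : IsRegularPDS S v k l m)
    (hcard : (Fintype.card G : K) ≠ 0) {a b : K} (hab : a ≠ b) (hsum : a + b = l - m)
    (hprod : a * b = m - k) : IsIdempotentElem (eigenprojection S a b) := by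
  have hJ : IsIdempotentElem ((Fintype.card G : K)⁻¹ • groupSum K (Finset.univ : Finset G)) := by
    rw [IsIdempotentElem, smul_mul_smul_comm, groupSum_mul_groupSum_univ, Finset.card_univ,
      smul_smul, mul_assoc, inv_mul_cancel₀ hcard, mul_one]
  have hcomm : Commute (groupSum K S) (groupSum K Finset.univ) :=
    (groupSum_mul_groupSum_univ S).trans (groupSum_univ_mul_groupSum S).symm
  refine isIdempotentElem_smul_sub_mul hab hJ.one_sub
    ((Commute.one_right _).sub_right (hcomm.smul_right _)) ?_
  rw [hS.sub_mul_sub_eq_smul_groupSum_univ hsum hprod, mul_sub, mul_one, mul_smul_comm,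
    smul_mul_assoc, groupSum_mul_groupSum_univ, Finset.card_univ, smul_comm, inv_smul_smul₀ hcard,
    sub_self]

theorem sub_dvd_of_mem_center (hS : IsRegularPDS S v k l m) {a b : ℤ} (hab : a ≠ b)
    (hsum : a + b = l - m) (hprod : a * b = m - k) {x : G} (hx : x ∈ Subgroup.center G)
    (hx_one : x ≠ 1) : a - b ∣ (if x ∈ S then (v : ℤ) else 0) - (k - b) := by
  have hcard : (Fintype.card G : ℚ) ≠ 0 := Nat.cast_ne_zero.mpr Fintype.card_ne_zero
  have he : IsIdempotentElem (eigenprojection S (a : ℚ) b) :=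
    hS.isIdempotentElem_eigenprojection hcard (by exact_mod_cast hab) (by exact_mod_cast hsum)
      (by exact_mod_cast hprod)
  have hab' : (a : ℚ) - b ≠ 0 := by exact_mod_cast sub_ne_zero.mpr hab
  refine dvd_of_isIntegral_div (K := ℚ) (sub_ne_zero.mpr hab) ?_
  convert isIntegral_card_mul_coeff (R := ℤ) he hx using 1
  rw [coeff_eigenprojection S _ _ hx_one, ← hS.1, ← hS.2.1, eq_intCast, eq_intCast]
  split_ifs
  · push_cast; field_simp
  · push_cast; field_simp; ring

end IsRegularPDS

theorem add_eq_and_mul_eq_of_eq_sqrt {a b c d : ℝ} (ha : a = (c + √(c ^ 2 + 4 * d)) / 2)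
    (hb : b = (c - √(c ^ 2 + 4 * d)) / 2) (hba : b < a) : a + b = c ∧ a * b = -d := by
  have hpos : 0 < √(c ^ 2 + 4 * d) := by linarith
  have hsq := Real.sq_sqrt (Real.sqrt_pos.mp hpos).le
  subst ha hb
  exact ⟨by ring, by linear_combination -hsq / 4⟩

theorem no_pds_in_p_group_general {G : Type*} [Group G] [Fintype G] [DecidableEq G]
    [Nontrivial (Subgroup.center G)] (v k l m : ℕ) (ν₂ ν₃ : ℤ)
    (hν₂ : (ν₂ : ℝ) = ((l : ℝ) - m + Real.sqrt (((l : ℝ) - m) ^ 2 + 4 * ((k : ℝ) - m))) / 2)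
    (hν₃ : (ν₃ : ℝ) = ((l : ℝ) - m - Real.sqrt (((l : ℝ) - m) ^ 2 + 4 * ((k : ℝ) - m))) / 2)
    (h23 : ν₂ > ν₃)
    (hd1 : ¬ (ν₂ - ν₃ ∣ (m : ℤ) - ν₃ * (ν₂ + 1)))
    (hd2 : ¬ (ν₂ - ν₃ ∣ (v : ℤ) - 2 * k + l - ν₃ * (ν₂ + 1))) :
    ¬ ∃ S : Finset G, IsRegularPDS S v k l m := by
  rintro ⟨S, hS⟩
  obtain ⟨hsumR, hprodR⟩ := add_eq_and_mul_eq_of_eq_sqrt hν₂ hν₃ (by exact_mod_cast h23)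
  have hsum : ν₂ + ν₃ = l - m := by exact_mod_cast hsumR
  have hprod : ν₂ * ν₃ = m - k := by rw [neg_sub] at hprodR; exact_mod_cast hprodR
  obtain ⟨⟨x, hx⟩, hx_one⟩ := exists_ne (1 : Subgroup.center G)
  have hdvd := hS.sub_dvd_of_mem_center h23.ne' hsum hprod hx (by simpa using hx_one)
  split_ifs at hdvd with hxS
  · have hsplit : (v : ℤ) - 2 * k + l - ν₃ * (ν₂ + 1) = v - (k - ν₃) + (ν₂ - ν₃) := by
      linear_combination -hsum - hprod
    exact hd2 (hsplit ▸ dvd_add_self_right.mpr hdvd)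
  · have hneg : (m : ℤ) - ν₃ * (ν₂ + 1) = -(0 - (k - ν₃)) := by
      linear_combination -hprod
    exact hd1 (hneg ▸ hdvd.neg_right)

/-- Let `p` be a prime and `G` a nontrivial finite `p`-group of order `v`, and
suppose `(v,k,λ,μ)` are parameters of a non-conference strongly regular graph with
integer eigenvalues `ν₂ > ν₃` such that `ν₂ - ν₃` divides neither
`μ - ν₃(ν₂+1)` nor `v - 2k + λ - ν₃(ν₂+1)`.  Then there is no regular
`(v,k,λ,μ)`-partial difference set in `G`. -/
theorem no_pds_in_p_group {G : Type*} [Group G] [Fintype G] [DecidableEq G]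
    [Nontrivial G] (p : ℕ) (hp : p.Prime) (hpG : IsPGroup p G)
    (v k l m : ℕ) (ν₂ ν₃ : ℤ)
    (hv : Fintype.card G = v)
    (hconf : ¬ (2 * (k : ℤ) = (v : ℤ) - 1 ∧ 4 * (l : ℤ) = (v : ℤ) - 5 ∧
      4 * (m : ℤ) = (v : ℤ) - 1))
    (hν₂ : (ν₂ : ℝ) = ((l : ℝ) - m + Real.sqrt (((l : ℝ) - m) ^ 2 + 4 * ((k : ℝ) - m))) / 2)
    (hν₃ : (ν₃ : ℝ) = ((l : ℝ) - m - Real.sqrt (((l : ℝ) - m) ^ 2 + 4 * ((k : ℝ) - m))) / 2)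
    (h23 : ν₂ > ν₃)
    (hd1 : ¬ (ν₂ - ν₃ ∣ (m : ℤ) - ν₃ * (ν₂ + 1)))
    (hd2 : ¬ (ν₂ - ν₃ ∣ (v : ℤ) - 2 * k + l - ν₃ * (ν₂ + 1))) :
    ¬ ∃ S : Finset G, IsRegularPDS S v k l m := by
  have : Fact p.Prime := ⟨hp⟩
  have : Nontrivial (Subgroup.center G) := hpG.center_nontrivial
  exact no_pds_in_p_group_general v k l m ν₂ ν₃ hν₂ hν₃ h23 hd1 hd2
end
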